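/- Let d ≥ 2. There exists a constant C_d depending only on d with the following property: whenever ρ⁰ and ρ¹ are finite Borel measures on ℝ^d and ψ ∈ L¹_loc(ℝ^d) has distributional gradient ∇ψ belonging to L¹(ℝ^d; ℝ^d) and satisfies Δψ = ρ¹ − ρ⁰ in the sense of distributions (i.e. ∫_{ℝ^d} ψ(x) Δφ(x) dx = ∫ φ dρ¹ − ∫ φ dρ⁰ for every smooth compactly supported φ : ℝ^d → ℝ), then for every δ with 0 < δ ≤ 1/2, ‖G_δ * ∇ψ − ∇ψ‖_{L¹(ℝ^d)} ≤ C_d · δ · (|log δ| + 1) · (ρ¹(ℝ^d) + ρ⁰(ℝ^d)). -/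

import Mathlib

open MeasureTheory Real

namespace PoiMol

abbrev EE (d : ℕ) := EuclideanSpace ℝ (Fin d)

noncomputable def DD {d : ℕ} (i : Fin d) (φ : EE d → ℝ) : EE d → ℝ :=
  fun y => fderiv ℝ φ y (EuclideanSpace.single i (1 : ℝ))

noncomputable def Lap {d : ℕ} (φ : EE d → ℝ) : EE d → ℝ :=
  fun y => ∑ j, DD j (DD j φ) y

variable {d : ℕ}

lemma DD_smooth (i : Fin d) {φ : EE d → ℝ} (h : ContDiff ℝ (⊤ : ℕ∞) φ) :
    ContDiff ℝ (⊤ : ℕ∞) (DD i φ) := by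
  unfold DD
  exact (h.fderiv_right (m := (⊤ : ℕ∞)) (by simp)).clm_apply contDiff_const

lemma DD_supp (i : Fin d) {φ : EE d → ℝ} (h : HasCompactSupport φ) :
    HasCompactSupport (DD i φ) := h.fderiv_apply (𝕜 := ℝ) _

lemma Lap_smooth {φ : EE d → ℝ} (h : ContDiff ℝ (⊤ : ℕ∞) φ) :
    ContDiff ℝ (⊤ : ℕ∞) (Lap φ) := by
  unfold Lap
  exact ContDiff.sum fun j _ => DD_smooth j (DD_smooth j h)

lemma Lap_supp {φ : EE d → ℝ} (h : HasCompactSupport φ) :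
    HasCompactSupport (Lap φ) := by
  have h2 : HasCompactSupport (fderiv ℝ φ) := h.fderiv (𝕜 := ℝ)
  apply h.mono'
  intro x hx
  by_contra hne
  apply hx
  unfold Lap
  apply Finset.sum_eq_zero
  intro j _
  have : x ∉ tsupport (DD j (DD j φ)) := fun h' =>
    hne (tsupport_fderiv_apply_subset ℝ _ (tsupport_fderiv_apply_subset ℝ _ h'))
  exact image_eq_zero_of_notMem_tsupport this

lemma DD_comm (i j : Fin d) {φ : EE d → ℝ} (h : ContDiff ℝ (⊤ : ℕ∞) φ) :
    DD i (DD j φ) = DD j (DD i φ) := by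
  have hs : ∀ x, IsSymmSndFDerivAt ℝ φ x := fun x =>
    (h.contDiffAt).isSymmSndFDerivAt (by
      simp only [minSmoothness_of_isRCLikeNormedField]
      exact WithTop.coe_le_coe.2 (le_top : (2 : ℕ∞) ≤ ⊤))
  have hd : Differentiable ℝ (fderiv ℝ φ) :=
    (h.fderiv_right (m := (⊤ : ℕ∞)) (by simp)).differentiable (by simp)
  funext x
  have key : ∀ a b : Fin d, DD a (DD b φ) x =
      fderiv ℝ (fderiv ℝ φ) x (EuclideanSpace.single a 1) (EuclideanSpace.single b 1) := by
    intro a b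
    unfold DD
    rw [fderiv_clm_apply (hd x) (by fun_prop)]
    simp
  rw [key, key, hs x]

lemma DD_Lap (i : Fin d) {φ : EE d → ℝ} (h : ContDiff ℝ (⊤ : ℕ∞) φ) :
    DD i (Lap φ) = Lap (DD i φ) := by
  funext x
  have : DD i (Lap φ) x = ∑ j, DD i (DD j (DD j φ)) x := by
    unfold Lap
    conv_lhs => unfold DD
    rw [fderiv_fun_sum]
    · rw [_root_.sum_apply]; rfl
    · intro j _
      exact ((DD_smooth j (DD_smooth j h)).differentiable (by simp)) x
  rw [this]
  unfold Lap
  refine Finset.sum_congr rfl fun j _ => ?_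
  rw [DD_comm i j (DD_smooth j h), DD_comm i j h]

lemma grad_apply (φ : EE d → ℝ) (x : EE d) (i : Fin d) : (gradient φ x) i = DD i φ x := by
  have := InnerProductSpace.toDual_symm_apply (𝕜 := ℝ) (x := EuclideanSpace.single i (1:ℝ))
    (y := fderiv ℝ φ x)
  unfold DD
  rw [← this, EuclideanSpace.inner_single_right]
  simp only [gradient, one_mul]; rfl

lemma base_identity (ρ0 ρ1 : Measure (EE d)) (ψ : EE d → ℝ) (g : EE d → EE d)
    (hψ : LocallyIntegrable ψ volume) (hg : Integrable g volume)
    (h1 : ∀ φ : EE d → ℝ, ContDiff ℝ (⊤ : ℕ∞) φ → HasCompactSupport φ →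
            ∫ x : EE d, ψ x • gradient φ x = - ∫ x : EE d, φ x • g x)
    (h2 : ∀ φ : EE d → ℝ, ContDiff ℝ (⊤ : ℕ∞) φ → HasCompactSupport φ →
            ∫ x : EE d, ψ x * Lap φ x = (∫ x, φ x ∂ρ1) - ∫ x, φ x ∂ρ0)
    (i : Fin d) (φ : EE d → ℝ) (hφ : ContDiff ℝ (⊤ : ℕ∞) φ) (hs : HasCompactSupport φ) :
    ∫ x, Lap φ x * g x i = - ((∫ x, DD i φ x ∂ρ1) - ∫ x, DD i φ x ∂ρ0) := by
  rw [← h2 _ (DD_smooth i hφ) (DD_supp i hs), ← DD_Lap i hφ]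
  have e := h1 _ (Lap_smooth hφ) (Lap_supp hs)
  have e2 := congrArg (fun v => EuclideanSpace.proj (𝕜 := ℝ) i v) e
  simp only [map_neg] at e2
  have hc : Continuous (Lap φ) := (Lap_smooth hφ).continuous
  have I1 : Integrable (fun x => ψ x • gradient (Lap φ) x) volume := by
    apply hψ.integrable_smul_right_of_hasCompactSupport
    · unfold gradient
      exact (LinearIsometryEquiv.continuous _).comp
        ((Lap_smooth hφ).continuous_fderiv (by simp))
    · have := (Lap_supp hs).fderiv (𝕜 := ℝ)
      exact this.comp_left (g := (InnerProductSpace.toDual ℝ (EE d)).symm) (by simp)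
  have I2 : Integrable (fun x => Lap φ x • g x) volume :=
    hg.locallyIntegrable.integrable_smul_left_of_hasCompactSupport hc (Lap_supp hs)
  rw [← ContinuousLinearMap.integral_comp_comm _ I1,
    ← ContinuousLinearMap.integral_comp_comm _ I2] at e2
  simp only [PiLp.proj_apply, PiLp.smul_apply, smul_eq_mul, grad_apply] at e2
  rw [e2, neg_neg]

lemma DD_mul (j : Fin d) {f h : EE d → ℝ} (hf : ContDiff ℝ (⊤ : ℕ∞) f)
    (hh : ContDiff ℝ (⊤ : ℕ∞) h) :
    DD j (fun y => f y * h y) = fun y => f y * DD j h y + h y * DD j f y := by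
  funext y
  unfold DD
  rw [fderiv_fun_mul (hf.differentiable (by simp) y) (hh.differentiable (by simp) y)]
  simp

lemma DD_add (j : Fin d) {f h : EE d → ℝ} (hf : ContDiff ℝ (⊤ : ℕ∞) f)
    (hh : ContDiff ℝ (⊤ : ℕ∞) h) :
    DD j (fun y => f y + h y) = fun y => DD j f y + DD j h y := by
  funext y
  unfold DD
  rw [fderiv_fun_add (hf.differentiable (by simp) y) (hh.differentiable (by simp) y)]
  simp

lemma DD_scale (j : Fin d) (f : EE d → ℝ) (c : ℝ) :
    DD j (fun y => f (c • y)) = fun y => c * DD j f (c • y) := by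
  funext y
  unfold DD
  rw [fderiv_comp_smul]
  simp

lemma bdd_of_cpt {f : EE d → ℝ} (hf : Continuous f) (hs : HasCompactSupport f) :
    ∃ M : ℝ, 0 ≤ M ∧ ∀ y, |f y| ≤ M := by
  obtain ⟨M, hM⟩ := hs.exists_bound_of_continuous hf
  exact ⟨M, (norm_nonneg _).trans (hM 0), hM⟩

lemma DD_cut (j : Fin d) {f h : EE d → ℝ} (hf : ContDiff ℝ (⊤ : ℕ∞) f)
    (hh : ContDiff ℝ (⊤ : ℕ∞) h) (c : ℝ) :
    DD j (fun y => f (c • y) * h y) =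
      fun y => f (c • y) * DD j h y + h y * (c * DD j f (c • y)) := by
  have sm : ContDiff ℝ (⊤ : ℕ∞) (fun y : EE d => f (c • y)) := hf.comp (contDiff_const_smul c)
  rw [DD_mul j sm hh, DD_scale]

lemma DDDD_cut (j : Fin d) {f h : EE d → ℝ} (hf : ContDiff ℝ (⊤ : ℕ∞) f)
    (hh : ContDiff ℝ (⊤ : ℕ∞) h) (c : ℝ) :
    DD j (DD j (fun y => f (c • y) * h y)) =
      fun y => f (c • y) * DD j (DD j h) y + c * (2 * (DD j h y * DD j f (c • y)))
        + c ^ 2 * (h y * DD j (DD j f) (c • y)) := by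
  have e : DD j (fun y => f (c • y) * h y) =
      fun y => f (c • y) * DD j h y + DD j f (c • y) * (c * h y) := by
    rw [DD_cut j hf hh c]; funext y; ring
  have sm : ContDiff ℝ (⊤ : ℕ∞) (fun y : EE d => c • y) := contDiff_const_smul c
  have hch : ContDiff ℝ (⊤ : ℕ∞) (fun y => c * h y) := contDiff_const.mul hh
  have s1 : ContDiff ℝ (⊤ : ℕ∞) (fun y : EE d => f (c • y) * DD j h y) :=
    (hf.comp sm).mul (DD_smooth j hh)
  have s2 : ContDiff ℝ (⊤ : ℕ∞) (fun y : EE d => DD j f (c • y) * (c * h y)) :=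
    ((DD_smooth j hf).comp sm).mul hch
  rw [e, DD_add j s1 s2,
    DD_cut j hf (DD_smooth j hh) c, DD_cut j (DD_smooth j hf) hch c,
    DD_mul j contDiff_const hh]
  funext y
  have : DD j (fun _ : EE d => c) y = 0 := by simp [DD]
  beta_reduce
  rw [this]
  ring

lemma tendsto_c : Filter.Tendsto (fun n : ℕ => (1 / ((n : ℝ) + 1))) Filter.atTop (nhds 0) :=
  tendsto_one_div_add_atTop_nhds_zero_nat

lemma c_bd (n : ℕ) : 0 ≤ (1 / ((n : ℝ) + 1)) ∧ (1 / ((n : ℝ) + 1)) ≤ 1 := by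
  refine ⟨by positivity, ?_⟩
  rw [div_le_one (by positivity)]
  have : (0:ℝ) ≤ n := by positivity
  linarith

lemma ext_identity (ρ0 ρ1 : Measure (EE d)) [IsFiniteMeasure ρ0] [IsFiniteMeasure ρ1]
    (g : EE d → EE d) (hg : Integrable g volume) (i : Fin d)
    (base : ∀ φ : EE d → ℝ, ContDiff ℝ (⊤ : ℕ∞) φ → HasCompactSupport φ →
      ∫ x, Lap φ x * g x i = - ((∫ x, DD i φ x ∂ρ1) - ∫ x, DD i φ x ∂ρ0))
    (φ : EE d → ℝ) (hφ : ContDiff ℝ (⊤ : ℕ∞) φ) (B : ℝ)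
    (b0 : ∀ y, |φ y| ≤ B) (b1 : ∀ j y, |DD j φ y| ≤ B) (b2 : ∀ j y, |DD j (DD j φ) y| ≤ B) :
    ∫ x, Lap φ x * g x i = - ((∫ x, DD i φ x ∂ρ1) - ∫ x, DD i φ x ∂ρ0) := by
  have hgi : Integrable (fun x => g x i) volume :=
    (EuclideanSpace.proj (𝕜 := ℝ) i).integrable_comp hg
  have hB : 0 ≤ B := (abs_nonneg _).trans (b0 0)
  let χ : ContDiffBump (0 : EE d) := ⟨1, 2, by norm_num, by norm_num⟩
  have hχ : ContDiff ℝ (⊤ : ℕ∞) χ := χ.contDiff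
  have hχs : HasCompactSupport χ := χ.hasCompactSupport
  have χ0 : χ 0 = 1 := χ.one_of_mem_closedBall (by simp [χ])
  have χb : ∀ y, |χ y| ≤ 1 := fun y => by
    rw [abs_of_nonneg χ.nonneg]; exact χ.le_one
  choose M1 M1n M1b using fun j : Fin d =>
    bdd_of_cpt (DD_smooth j hχ).continuous (DD_supp j hχs)
  choose M2 M2n M2b using fun j : Fin d =>
    bdd_of_cpt (DD_smooth j (DD_smooth j hχ)).continuous (DD_supp j (DD_supp j hχs))
  let c : ℕ → ℝ := fun n => 1 / ((n : ℝ) + 1)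
  have hc : Filter.Tendsto c Filter.atTop (nhds 0) := tendsto_c
  have cn : ∀ n, |c n| ≤ 1 := fun n => by
    rw [abs_of_nonneg (c_bd n).1]; exact (c_bd n).2
  have hcpos : ∀ n, c n ≠ 0 := fun n => by simp only [c]; positivity
  let Φ : ℕ → EE d → ℝ := fun n y => χ (c n • y) * φ y
  have Φsm : ∀ n, ContDiff ℝ (⊤ : ℕ∞) (Φ n) := fun n =>
    (hχ.comp (contDiff_const_smul (c n))).mul hφ
  have Φsupp : ∀ n, HasCompactSupport (Φ n) := fun n =>
    (hχs.comp_smul (hcpos n)).mul_right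
  have hcy : ∀ y : EE d, Filter.Tendsto (fun n => c n • y) Filter.atTop (nhds 0) := fun y => by
    simpa using hc.smul_const y
  have tχ : ∀ y, Filter.Tendsto (fun n => χ (c n • y)) Filter.atTop (nhds 1) := fun y => by
    rw [← χ0]; exact (hχ.continuous.tendsto 0).comp (hcy y)
  -- pointwise limits
  have t1 : ∀ j y, Filter.Tendsto (fun n => DD j (Φ n) y) Filter.atTop (nhds (DD j φ y)) := by
    intro j y
    have e : (fun n => DD j (Φ n) y) = fun n =>
        χ (c n • y) * DD j φ y + φ y * (c n * DD j χ (c n • y)) := by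
      funext n; simp only [Φ]; rw [DD_cut j hχ hφ]
    rw [e]
    have l : Filter.Tendsto (fun n => DD j χ (c n • y)) Filter.atTop (nhds (DD j χ 0)) :=
      ((DD_smooth j hχ).continuous.tendsto 0).comp (hcy y)
    simpa using ((tχ y).mul_const (DD j φ y)).add ((hc.mul l).const_mul (φ y))
  have t2 : ∀ j y, Filter.Tendsto (fun n => DD j (DD j (Φ n)) y) Filter.atTop
      (nhds (DD j (DD j φ) y)) := by
    intro j y
    have e : (fun n => DD j (DD j (Φ n)) y) = fun n =>
        χ (c n • y) * DD j (DD j φ) y + c n * (2 * (DD j φ y * DD j χ (c n • y)))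
        + (c n) ^ 2 * (φ y * DD j (DD j χ) (c n • y)) := by
      funext n; simp only [Φ]; rw [DDDD_cut j hχ hφ]
    rw [e]
    have l : Filter.Tendsto (fun n => DD j χ (c n • y)) Filter.atTop (nhds (DD j χ 0)) :=
      ((DD_smooth j hχ).continuous.tendsto 0).comp (hcy y)
    have l2 : Filter.Tendsto (fun n => DD j (DD j χ) (c n • y)) Filter.atTop
        (nhds (DD j (DD j χ) 0)) :=
      ((DD_smooth j (DD_smooth j hχ)).continuous.tendsto 0).comp (hcy y)
    simpa using (((tχ y).mul_const (DD j (DD j φ) y)).add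
      (hc.mul ((l.const_mul (DD j φ y)).const_mul 2))).add ((hc.pow 2).mul (l2.const_mul (φ y)))
  have bd1 : ∀ n j y, |DD j (Φ n) y| ≤ B + B * M1 j := by
    intro n j y
    have e : DD j (Φ n) y = χ (c n • y) * DD j φ y + φ y * (c n * DD j χ (c n • y)) := by
      simp only [Φ]; rw [DD_cut j hχ hφ]
    rw [e]
    refine (abs_add_le _ _).trans ?_
    rw [abs_mul, abs_mul, abs_mul]
    have a1 := mul_le_mul (χb (c n • y)) (b1 j y) (abs_nonneg _) zero_le_one
    have a2 := mul_le_mul (cn n) (M1b j (c n • y)) (abs_nonneg _) zero_le_one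
    have a3 := mul_le_mul (b0 y) a2 (by positivity) hB
    linarith
  have bd2 : ∀ n j y, |DD j (DD j (Φ n)) y| ≤ B + 2 * (B * M1 j) + B * M2 j := by
    intro n j y
    have e : DD j (DD j (Φ n)) y = 
        χ (c n • y) * DD j (DD j φ) y + c n * (2 * (DD j φ y * DD j χ (c n • y)))
        + (c n) ^ 2 * (φ y * DD j (DD j χ) (c n • y)) := by
      simp only [Φ]; rw [DDDD_cut j hχ hφ]
    rw [e]
    refine (abs_add_three _ _ _).trans ?_
    simp only [abs_mul, abs_pow, abs_two]
    have a1 := mul_le_mul (χb (c n • y)) (b2 j y) (abs_nonneg _) zero_le_one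
    have a2 := mul_le_mul (b1 j y) (M1b j (c n • y)) (abs_nonneg _) hB
    have a3 := mul_le_mul (cn n) a2 (by positivity) zero_le_one
    have a4 := mul_le_mul (b0 y) (M2b j (c n • y)) (abs_nonneg _) hB
    have a5 := mul_le_mul (pow_le_one₀ (n := 2) (abs_nonneg _) (cn n)) a4 (by positivity)
      zero_le_one
    linarith
  have lim1 : ∀ (ρ : Measure (EE d)) [IsFiniteMeasure ρ], Filter.Tendsto
      (fun n => ∫ x, DD i (Φ n) x ∂ρ) Filter.atTop (nhds (∫ x, DD i φ x ∂ρ)) := by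
    intro ρ _
    refine tendsto_integral_of_dominated_convergence (fun _ => B + B * M1 i) ?_ ?_ ?_ ?_
    · exact fun n => (DD_smooth i (Φsm n)).continuous.aestronglyMeasurable
    · exact integrable_const _
    · exact fun n => Filter.Eventually.of_forall fun y => bd1 n i y
    · exact Filter.Eventually.of_forall fun y => t1 i y
  have lim2 : Filter.Tendsto (fun n => ∫ x, Lap (Φ n) x * g x i) Filter.atTop
      (nhds (∫ x, Lap φ x * g x i)) := by
    refine tendsto_integral_of_dominated_convergence
      (fun x => (∑ j, (B + 2 * (B * M1 j) + B * M2 j)) * |g x i|) ?_ ?_ ?_ ?_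
    · exact fun n => (Lap_smooth (Φsm n)).continuous.aestronglyMeasurable.mul
        hgi.aestronglyMeasurable
    · exact hgi.abs.const_mul _
    · refine fun n => Filter.Eventually.of_forall fun y => ?_
      rw [norm_mul, Real.norm_eq_abs, Real.norm_eq_abs]
      refine mul_le_mul_of_nonneg_right ?_ (abs_nonneg _)
      exact (Finset.abs_sum_le_sum_abs _ _).trans (Finset.sum_le_sum fun j _ => bd2 n j y)
    · refine Filter.Eventually.of_forall fun y => ?_
      exact (tendsto_finsetSum _ fun j _ => t2 j y).mul_const _
  refine tendsto_nhds_unique lim2 ?_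
  simp_rw [fun n => base (Φ n) (Φsm n) (Φsupp n)]
  exact ((lim1 ρ1).sub (lim1 ρ0)).neg

noncomputable def gs (K a : ℝ) (x : EE d) : EE d → ℝ := fun y => K * Real.exp (-(a * ‖x - y‖ ^ 2))

lemma gs_smooth (K a : ℝ) (x : EE d) : ContDiff ℝ (⊤ : ℕ∞) (gs K a x) := by
  unfold gs
  exact contDiff_const.mul (((contDiff_const.mul
    ((contDiff_const.sub contDiff_id).norm_sq ℝ)).neg).exp)

lemma DD_gs (K a : ℝ) (x : EE d) (j : Fin d) :
    DD j (gs K a x) = fun y => gs K a x y * (2 * a * (x j - y j)) := by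
  funext y
  have h1 : HasFDerivAt (fun y : EE d => x - y) (-(ContinuousLinearMap.id ℝ (EE d))) y := by
    simpa using (hasFDerivAt_id y).const_sub x
  have h2 : HasFDerivAt (fun y : EE d => K * Real.exp (-(a * ‖x - y‖ ^ 2))) _ y :=
    ((((h1.norm_sq).const_mul a).neg).exp).const_mul K
  have e : gs K a x = fun y => K * Real.exp (-(a * ‖x - y‖ ^ 2)) := rfl
  unfold DD
  rw [e, h2.fderiv]
  simp [EuclideanSpace.inner_single_right]
  ring

lemma DDDD_gs (K a : ℝ) (x : EE d) (j : Fin d) :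
    DD j (DD j (gs K a x)) = fun y => gs K a x y * (4 * a ^ 2 * (x j - y j) ^ 2 - 2 * a) := by
  have hl : ContDiff ℝ (⊤ : ℕ∞) (fun y : EE d => 2 * a * (x j - y j)) := by fun_prop
  rw [DD_gs, DD_mul j (gs_smooth K a x) hl, DD_gs]
  funext y
  have : DD j (fun y : EE d => 2 * a * (x j - y j)) y = - (2 * a) := by
    have h1 : HasFDerivAt (fun y : EE d => y j) (EuclideanSpace.proj (𝕜 := ℝ) j) y :=
      (EuclideanSpace.proj (𝕜 := ℝ) j).hasFDerivAt
    have h2 := (h1.const_sub (x j)).const_mul (2 * a)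
    unfold DD
    rw [h2.fderiv]
    simp
  rw [this]
  ring

lemma Lap_gs (K a : ℝ) (x : EE d) :
    Lap (gs K a x) = fun y => gs K a x y * (4 * a ^ 2 * ‖x - y‖ ^ 2 - 2 * a * d) := by
  funext y
  unfold Lap
  simp_rw [DDDD_gs]
  rw [← Finset.mul_sum, Finset.sum_sub_distrib, ← Finset.mul_sum, EuclideanSpace.real_norm_sq_eq]
  simp only [PiLp.sub_apply, Finset.sum_const, Finset.card_univ, Fintype.card_fin, nsmul_eq_mul]
  ring

lemma t_exp_le (t : ℝ) : t * Real.exp (-t) ≤ 1 := by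
  have h := Real.add_one_le_exp t
  have : Real.exp t * Real.exp (-t) = 1 := by rw [← Real.exp_add]; simp
  have hp := Real.exp_pos (-t)
  nlinarith

lemma coord_sq_le (z : EE d) (j : Fin d) : (z j) ^ 2 ≤ ‖z‖ ^ 2 := by
  have := PiLp.norm_apply_le z j
  rw [Real.norm_eq_abs] at this
  rw [← sq_abs]
  exact pow_le_pow_left₀ (abs_nonneg _) this 2

lemma gs_identity (ρ0 ρ1 : Measure (EE d)) [IsFiniteMeasure ρ0] [IsFiniteMeasure ρ1]
    (g : EE d → EE d) (hg : Integrable g volume) (i : Fin d)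
    (base : ∀ φ : EE d → ℝ, ContDiff ℝ (⊤ : ℕ∞) φ → HasCompactSupport φ →
      ∫ x, Lap φ x * g x i = - ((∫ x, DD i φ x ∂ρ1) - ∫ x, DD i φ x ∂ρ0))
    (K a : ℝ) (hK : 0 ≤ K) (ha : 0 ≤ a) (x : EE d) :
    ∫ y, (gs K a x y * (4 * a ^ 2 * ‖x - y‖ ^ 2 - 2 * a * d)) * g y i =
      - ((∫ y, gs K a x y * (2 * a * (x i - y i)) ∂ρ1)
        - ∫ y, gs K a x y * (2 * a * (x i - y i)) ∂ρ0) := by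
  have hb : ∀ y j, a * (x j - y j) ^ 2 * Real.exp (-(a * ‖x - y‖ ^ 2)) ≤ 1 := by
    intro y j
    refine le_trans ?_ (t_exp_le (a * ‖x - y‖ ^ 2))
    have := coord_sq_le (x - y) j
    simp only [PiLp.sub_apply] at this
    gcongr
  have he : ∀ y : EE d, Real.exp (-(a * ‖x - y‖ ^ 2)) ≤ 1 := fun y => by
    rw [Real.exp_le_one_iff]
    have : 0 ≤ a * ‖x - y‖ ^ 2 := by positivity
    linarith
  have key := ext_identity ρ0 ρ1 g hg i base (gs K a x) (gs_smooth K a x) (K * (6 * a + 6)) ?_ ?_ ?_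
  · rw [Lap_gs, DD_gs] at key
    exact key
  · intro y
    unfold gs
    have h1 := he y
    have h2 := Real.exp_pos (-(a * ‖x - y‖ ^ 2))
    rw [abs_of_nonneg (by positivity)]
    gcongr
    nlinarith
  · intro j y
    rw [DD_gs]
    unfold gs
    have h1 := he y
    have h2 := Real.exp_pos (-(a * ‖x - y‖ ^ 2))
    have h3 := hb y j
    simp only [abs_mul, Real.abs_exp, abs_of_nonneg hK, abs_of_nonneg ha, abs_two]
    rw [mul_assoc]
    refine mul_le_mul_of_nonneg_left ?_ hK
    have h4 : |x j - y j| ≤ 1 + (x j - y j) ^ 2 := by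
      rw [← sq_abs]; nlinarith [sq_nonneg (|x j - y j| - 1), abs_nonneg (x j - y j)]
    calc rexp (-(a * ‖x - y‖ ^ 2)) * (2 * a * |x j - y j|)
        ≤ rexp (-(a * ‖x - y‖ ^ 2)) * (2 * a * (1 + (x j - y j) ^ 2)) := by gcongr
      _ = 2 * a * rexp (-(a * ‖x - y‖ ^ 2))
          + 2 * (a * (x j - y j) ^ 2 * rexp (-(a * ‖x - y‖ ^ 2))) := by ring
      _ ≤ 2 * a * 1 + 2 * 1 := by gcongr
      _ ≤ _ := by linarith
  · intro j y
    rw [DDDD_gs]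
    unfold gs
    have h1 := he y
    have h2 := Real.exp_pos (-(a * ‖x - y‖ ^ 2))
    have h3 := hb y j
    beta_reduce
    rw [mul_assoc, abs_mul, abs_of_nonneg hK]
    refine mul_le_mul_of_nonneg_left ?_ hK
    have e : rexp (-(a * ‖x - y‖ ^ 2)) * (4 * a ^ 2 * (x j - y j) ^ 2 - 2 * a) =
      4 * a * (a * (x j - y j) ^ 2 * rexp (-(a * ‖x - y‖ ^ 2)))
        - 2 * a * rexp (-(a * ‖x - y‖ ^ 2)) := by ring
    have h5 : 0 ≤ a * (x j - y j) ^ 2 * rexp (-(a * ‖x - y‖ ^ 2)) := by positivity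
    have h6 := mul_le_mul_of_nonneg_left h3 ha
    have h7 := mul_le_mul_of_nonneg_left h1 ha
    have h8 := mul_nonneg ha h5
    have h9 := mul_nonneg ha h2.le
    rw [e, abs_le]
    constructor <;> nlinarith


noncomputable def gk (r : ℝ) (z : EE d) : ℝ := (r ^ d)⁻¹ * Real.exp (-(π * ‖z‖ ^ 2 / r ^ 2))

noncomputable def dk (r : ℝ) (z : EE d) : ℝ := gk r z * (2 * π * ‖z‖ ^ 2 / r ^ 3 - d / r)

noncomputable def kv (r : ℝ) (z : EE d) : EE d := (gk r z / r) • z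

lemma gk_meas : Measurable (fun p : ℝ × EE d => gk p.1 p.2) := by
  unfold gk; fun_prop

lemma dk_meas : Measurable (fun p : ℝ × EE d => dk p.1 p.2) := by
  have := gk_meas (d := d)
  unfold dk; fun_prop

lemma kv_meas : Measurable (fun p : ℝ × EE d => kv p.1 p.2) := by
  have := gk_meas (d := d)
  unfold kv; fun_prop

lemma gk_cont (r : ℝ) : Continuous (fun z : EE d => gk r z) := by
  unfold gk
  exact continuous_const.mul (Real.continuous_exp.comp (by fun_prop))

lemma gk_nonneg {r : ℝ} (hr : 0 < r) (z : EE d) : 0 ≤ gk r z := by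
  unfold gk; positivity

lemma gk_le {r : ℝ} (hr : 0 < r) (z : EE d) : gk r z ≤ (r ^ d)⁻¹ := by
  unfold gk
  apply mul_le_of_le_one_right (by positivity)
  rw [Real.exp_le_one_iff]
  have : 0 ≤ π * ‖z‖ ^ 2 / r ^ 2 := by positivity
  linarith

lemma gk_t_le {r : ℝ} (hr : 0 < r) (z : EE d) :
    gk r z * (π * ‖z‖ ^ 2 / r ^ 2) ≤ (r ^ d)⁻¹ := by
  unfold gk
  have := t_exp_le (π * ‖z‖ ^ 2 / r ^ 2)
  calc _ = (r ^ d)⁻¹ * ((π * ‖z‖ ^ 2 / r ^ 2) * rexp (-(π * ‖z‖ ^ 2 / r ^ 2))) := by ring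
    _ ≤ (r ^ d)⁻¹ * 1 := by gcongr
    _ = _ := mul_one _

lemma dk_bound {r : ℝ} (hr : 0 < r) (z : EE d) :
    |dk r z| ≤ (r ^ d)⁻¹ * ((2 + d) / r) := by
  have e : dk r z = (2 / r) * (gk r z * (π * ‖z‖ ^ 2 / r ^ 2)) - d / r * gk r z := by
    unfold dk; field_simp
  have h1 := gk_t_le hr z
  have h2 := gk_le hr z
  have h0 := gk_nonneg hr z
  have h3 : 0 ≤ gk r z * (π * ‖z‖ ^ 2 / r ^ 2) := by positivity
  rw [e]
  refine (abs_sub _ _).trans ?_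
  rw [abs_of_nonneg (by positivity), abs_of_nonneg (by positivity)]
  calc _ ≤ (2 / r) * (r ^ d)⁻¹ + d / r * (r ^ d)⁻¹ := by gcongr
    _ = _ := by ring

lemma gk_deriv {r : ℝ} (hr : 0 < r) (z : EE d) : HasDerivAt (fun r => gk r z) (dk r z) r := by
  have h1 : HasDerivAt (fun r : ℝ => (r ^ d)⁻¹) (-(d * r ^ (d - 1)) / (r ^ d) ^ 2) r :=
    (hasDerivAt_pow d r).fun_inv (by positivity)
  have h2 : HasDerivAt (fun r : ℝ => (r ^ 2)) (2 * r) r := by simpa using hasDerivAt_pow 2 r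
  have h3 : HasDerivAt (fun r : ℝ => π * ‖z‖ ^ 2 / r ^ 2) _ r :=
    (hasDerivAt_const r (π * ‖z‖ ^ 2)).div h2 (by positivity)
  have h4 : HasDerivAt (fun r => gk r z) _ r := h1.mul h3.fun_neg.exp
  convert h4 using 1
  unfold dk gk
  rcases d with _ | n
  · simp; field_simp
  · simp only [Nat.add_sub_cancel]
    field_simp
    ring

lemma gk_eq_gs (r : ℝ) (x y : EE d) : gk r (x - y) = gs ((r ^ d)⁻¹) (π / r ^ 2) x y := by
  unfold gk gs; congr 3; ring

lemma int_bdd {g : EE d → EE d} (hg : Integrable g volume) {k : EE d → ℝ} (hk : Measurable k)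
    (B : ℝ) (hB : ∀ y, |k y| ≤ B) : Integrable (fun y => k y • g y) volume :=
  hg.bdd_smul B hk.aestronglyMeasurable (Filter.Eventually.of_forall hB)

lemma kv_norm_bound {r : ℝ} (hr : 0 < r) (z : EE d) :
    ‖kv r z‖ ≤ (r ^ d)⁻¹ * (1 / r + r) := by
  have h1 := gk_t_le hr z
  have h2 := gk_le hr z
  have h0 := gk_nonneg hr z
  unfold kv
  rw [norm_smul, Real.norm_eq_abs, abs_of_nonneg (by positivity)]
  have h4 : ‖z‖ ≤ 1 + π * ‖z‖ ^ 2 := by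
    nlinarith [sq_nonneg (‖z‖ - 1), norm_nonneg z, Real.pi_gt_three, sq_nonneg ‖z‖]
  calc gk r z / r * ‖z‖ ≤ gk r z / r * (1 + π * ‖z‖ ^ 2) := by gcongr
    _ = gk r z * (1 / r) + gk r z * (π * ‖z‖ ^ 2 / r ^ 2) * r := by field_simp
    _ ≤ (r ^ d)⁻¹ * (1 / r) + (r ^ d)⁻¹ * r := by gcongr
    _ = _ := by ring

lemma kv_integrable {r : ℝ} (hr : 0 < r) (x : EE d) (ρ : Measure (EE d)) [IsFiniteMeasure ρ] :
    Integrable (fun y => kv r (x - y)) ρ := by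
  refine Integrable.of_bound (C := (r ^ d)⁻¹ * (1 / r + r)) ?_
    (Filter.Eventually.of_forall fun y => kv_norm_bound hr _)
  have : Measurable (fun y : EE d => (r, x - y)) := by fun_prop
  exact (kv_meas.comp this).aestronglyMeasurable

lemma dk_identity (ρ0 ρ1 : Measure (EE d)) [IsFiniteMeasure ρ0] [IsFiniteMeasure ρ1]
    (g : EE d → EE d) (hg : Integrable g volume)
    (base : ∀ i, ∀ φ : EE d → ℝ, ContDiff ℝ (⊤ : ℕ∞) φ → HasCompactSupport φ →
      ∫ x, Lap φ x * g x i = - ((∫ x, DD i φ x ∂ρ1) - ∫ x, DD i φ x ∂ρ0))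
    {r : ℝ} (hr : 0 < r) (x : EE d) :
    ∫ y, dk r (x - y) • g y = - ((∫ y, kv r (x - y) ∂ρ1) - ∫ y, kv r (x - y) ∂ρ0) := by
  have mm : Measurable (fun y : EE d => (r, x - y)) := by fun_prop
  have I1 : Integrable (fun y => dk r (x - y) • g y) volume :=
    int_bdd hg (dk_meas.comp mm) _ (fun y => dk_bound hr _)
  ext i
  have key := gs_identity ρ0 ρ1 g hg i (base i) ((r ^ d)⁻¹) (π / r ^ 2) (by positivity)
    (by positivity) x
  have L : (∫ y, dk r (x - y) • g y) i = ∫ y, dk r (x - y) * g y i := by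
    have := ContinuousLinearMap.integral_comp_comm (EuclideanSpace.proj (𝕜 := ℝ) i) I1
    simpa using this.symm
  have R : ∀ (ρ : Measure (EE d)) [IsFiniteMeasure ρ],
      (∫ y, kv r (x - y) ∂ρ) i = ∫ y, (gk r (x - y) / r) * (x i - y i) ∂ρ := by
    intro ρ _
    have := ContinuousLinearMap.integral_comp_comm (EuclideanSpace.proj (𝕜 := ℝ) i)
      (kv_integrable hr x ρ)
    simpa [kv] using this.symm
  simp only [PiLp.neg_apply, PiLp.sub_apply]
  rw [L, R, R]
  simp_rw [← gk_eq_gs] at key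
  have e1 : ∀ y, dk r (x - y) * g y i = (r / (2 * π)) *
      ((gk r (x - y) * (4 * (π / r ^ 2) ^ 2 * ‖x - y‖ ^ 2 - 2 * (π / r ^ 2) * d)) * g y i) := by
    intro y; unfold dk; field_simp; ring
  have e2 : ∀ y, (gk r (x - y) / r) * (x i - y i) = (r / (2 * π)) *
      (gk r (x - y) * (2 * (π / r ^ 2) * (x i - y i))) := by
    intro y; field_simp
  simp_rw [e1, e2, integral_const_mul]
  rw [key]
  ring

lemma ftc_identity (g : EE d → EE d) (hg : Integrable g volume) {ε δ : ℝ} (hε : 0 < ε)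
    (hδ : ε ≤ δ) (x : EE d) :
    (∫ y, gk δ (x - y) • g y) - ∫ y, gk ε (x - y) • g y =
      ∫ r in ε..δ, ∫ y, dk r (x - y) • g y := by
  have hδ0 : 0 < δ := hε.trans_le hδ
  have mm : ∀ r : ℝ, Measurable (fun y : EE d => (r, x - y)) := fun r => by fun_prop
  have I1 : ∀ r, 0 < r → Integrable (fun y => gk r (x - y) • g y) volume := fun r hr =>
    int_bdd hg (gk_meas.comp (mm r)) ((r ^ d)⁻¹) (fun y => by
      rw [abs_of_nonneg (gk_nonneg hr _)]; exact gk_le hr _)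
  have dkb : ∀ r ∈ Set.Icc ε δ, ∀ z : EE d, |dk r z| ≤ (ε ^ d)⁻¹ * ((2 + d) / ε) := by
    intro r hr z
    refine (dk_bound (hε.trans_le hr.1) z).trans ?_
    have := hr.1
    have h0 : 0 < r := hε.trans_le hr.1
    gcongr
  have mr : ∀ z : EE d, Measurable (fun r : ℝ => (r, z)) := fun z => by fun_prop
  rw [intervalIntegral_integral_swap, ← integral_sub (I1 δ hδ0) (I1 ε hε)]
  · congr 1
    funext y
    rw [intervalIntegral.integral_smul_const, ← sub_smul]
    congr 1
    symm
    apply intervalIntegral.integral_eq_sub_of_hasDerivAt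
    · intro r hr
      rw [Set.uIcc_of_le hδ] at hr
      exact gk_deriv (hε.trans_le hr.1) _
    · rw [intervalIntegrable_iff_integrableOn_Ioc_of_le hδ]
      refine Measure.integrableOn_of_bounded (M := (ε ^ d)⁻¹ * ((2 + d) / ε)) (by simp)
        (dk_meas.comp (mr _)).aestronglyMeasurable ?_
      refine (ae_restrict_iff' measurableSet_Ioc).2 (Filter.Eventually.of_forall fun r hr => ?_)
      exact dkb r ⟨hr.1.le, hr.2⟩ _
  · rw [Set.uIoc_of_le hδ]
    have hg2 : Integrable (fun p : ℝ × EE d => g p.2)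
        ((volume.restrict (Set.Ioc ε δ)).prod volume) := hg.comp_snd _
    have m3 : Measurable (fun p : ℝ × EE d => (p.1, x - p.2)) := by fun_prop
    refine hg2.bdd_smul (φ := fun p : ℝ × EE d => dk p.1 (x - p.2))
      ((ε ^ d)⁻¹ * ((2 + d) / ε)) (dk_meas.comp m3).aestronglyMeasurable ?_
    have : ∀ᵐ r ∂(volume.restrict (Set.Ioc ε δ)), r ∈ Set.Ioc ε δ :=
      ae_restrict_mem measurableSet_Ioc
    have h2 := (Measure.quasiMeasurePreserving_fst (μ := volume.restrict (Set.Ioc ε δ))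
      (ν := (volume : Measure (EE d)))).ae this
    filter_upwards [h2] with p hp
    exact dkb _ ⟨hp.1.le, hp.2⟩ _

lemma lint_smul {f : EE d → ENNReal} (hf : Measurable f) {c : ℝ} (hc : 0 < c) :
    ∫⁻ z, f (c • z) = ENNReal.ofReal ((c ^ d)⁻¹) * ∫⁻ z, f z := by
  have hm : Measurable (fun z : EE d => c • z) := by fun_prop
  rw [← lintegral_map hf hm, Measure.map_addHaar_smul _ hc.ne', lintegral_smul_measure,
    finrank_euclideanSpace, Fintype.card_fin, abs_of_nonneg (by positivity)]
  simp

lemma gk_scale {r : ℝ} (hr : 0 < r) (z : EE d) : gk r (r • z) = (r ^ d)⁻¹ * gk 1 z := by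
  unfold gk
  rw [norm_smul, mul_pow, Real.norm_eq_abs, sq_abs]
  have : π * (r ^ 2 * ‖z‖ ^ 2) / r ^ 2 = π * ‖z‖ ^ 2 / 1 ^ 2 := by field_simp
  rw [this]; simp

lemma kv_scale {r : ℝ} (hr : 0 < r) (z : EE d) : kv r (r • z) = (r ^ d)⁻¹ • kv 1 z := by
  unfold kv
  rw [gk_scale hr, smul_smul, smul_smul]
  congr 1
  field_simp

lemma kvr_meas (r : ℝ) : Measurable (fun z : EE d => kv r z) :=
  kv_meas.comp (by fun_prop : Measurable (fun z : EE d => (r, z)))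

lemma lint_kv {r : ℝ} (hr : 0 < r) : ∫⁻ z : EE d, ‖kv r z‖ₑ = ∫⁻ z : EE d, ‖kv 1 z‖ₑ := by
  have h := lint_smul (f := fun z : EE d => ‖kv r z‖ₑ) (kvr_meas r).enorm hr
  simp_rw [kv_scale hr, enorm_smul] at h
  rw [lintegral_const_mul _ (kvr_meas 1).enorm, Real.enorm_of_nonneg (by positivity)] at h
  refine ((ENNReal.mul_right_inj ?_ ENNReal.ofReal_ne_top).1 h).symm
  rw [ne_eq, ENNReal.ofReal_eq_zero, not_le]; positivity

lemma gauss_int {b : ℝ} (hb : 0 < b) : Integrable (fun z : EE d => Real.exp (-b * ‖z‖ ^ 2)) := by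
  by_contra h
  have := GaussianFourier.integral_rexp_neg_mul_sq_norm (V := EE d) hb
  rw [integral_undef h] at this
  have h2 : 0 < (π / b) ^ (Module.finrank ℝ (EE d) / 2 : ℝ) := by positivity
  linarith

lemma kv1_integrable : Integrable (fun z : EE d => kv 1 z) := by
  refine (gauss_int (d := d) one_pos).mono' (kvr_meas 1).aestronglyMeasurable
    (Filter.Eventually.of_forall fun z => ?_)
  unfold kv gk
  rw [norm_smul, Real.norm_eq_abs, abs_of_nonneg (by positivity)]
  simp only [one_pow, inv_one, one_mul, div_one]
  have h1 : ‖z‖ ≤ Real.exp (2 * ‖z‖ ^ 2) := by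
    have := Real.add_one_le_exp (2 * ‖z‖ ^ 2)
    nlinarith [sq_nonneg (‖z‖ - 1)]
  calc _ ≤ rexp (-(π * ‖z‖ ^ 2)) * Real.exp (2 * ‖z‖ ^ 2) := by gcongr
    _ = rexp (-(π * ‖z‖ ^ 2) + 2 * ‖z‖ ^ 2) := by rw [Real.exp_add]
    _ ≤ _ := by
      apply Real.exp_le_exp.2
      nlinarith [Real.pi_gt_three, sq_nonneg ‖z‖]

lemma L1_diff (ρ0 ρ1 : Measure (EE d)) [IsFiniteMeasure ρ0] [IsFiniteMeasure ρ1]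
    (g : EE d → EE d) (hg : Integrable g volume)
    (base : ∀ i, ∀ φ : EE d → ℝ, ContDiff ℝ (⊤ : ℕ∞) φ → HasCompactSupport φ →
      ∫ x, Lap φ x * g x i = - ((∫ x, DD i φ x ∂ρ1) - ∫ x, DD i φ x ∂ρ0))
    {ε δ : ℝ} (hε : 0 < ε) (hδ : ε ≤ δ) :
    ∫⁻ x, ‖(∫ y, gk δ (x - y) • g y) - ∫ y, gk ε (x - y) • g y‖ₑ ≤
      (∫⁻ z : EE d, ‖kv 1 z‖ₑ) * (ρ1 Set.univ + ρ0 Set.univ) * ENNReal.ofReal (δ - ε) := by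
  have m3 : Measurable (fun p : (EE d × ℝ) × EE d => ‖kv p.1.2 (p.1.1 - p.2)‖ₑ) := by
    have : Measurable (fun p : (EE d × ℝ) × EE d => (p.1.2, p.1.1 - p.2)) := by fun_prop
    exact (kv_meas.comp this).enorm
  have m2 : Measurable (fun p : EE d × ℝ => ∫⁻ y, ‖kv p.2 (p.1 - y)‖ₑ ∂(ρ1 + ρ0)) :=
    m3.lintegral_prod_right'
  have pt : ∀ x, ‖(∫ y, gk δ (x - y) • g y) - ∫ y, gk ε (x - y) • g y‖ₑ ≤
      ∫⁻ r in Set.Ioc ε δ, ∫⁻ y, ‖kv r (x - y)‖ₑ ∂(ρ1 + ρ0) := by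
    intro x
    rw [ftc_identity g hg hε hδ x, intervalIntegral.integral_of_le hδ]
    refine (enorm_integral_le_lintegral_enorm _).trans ?_
    refine setLIntegral_mono' measurableSet_Ioc fun r hr => ?_
    rw [dk_identity ρ0 ρ1 g hg base (hε.trans hr.1) x, enorm_neg, lintegral_add_measure]
    refine enorm_sub_le.trans ?_
    gcongr <;> exact enorm_integral_le_lintegral_enorm _
  calc _ ≤ ∫⁻ x, ∫⁻ r in Set.Ioc ε δ, ∫⁻ y, ‖kv r (x - y)‖ₑ ∂(ρ1 + ρ0) := lintegral_mono pt
    _ = ∫⁻ r in Set.Ioc ε δ, ∫⁻ x, ∫⁻ y, ‖kv r (x - y)‖ₑ ∂(ρ1 + ρ0) :=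
      lintegral_lintegral_swap m2.aemeasurable
    _ = ∫⁻ r in Set.Ioc ε δ, (∫⁻ z : EE d, ‖kv 1 z‖ₑ) * (ρ1 Set.univ + ρ0 Set.univ) := by
      refine setLIntegral_congr_fun measurableSet_Ioc fun r hr => ?_
      have mr : Measurable (fun p : EE d × EE d => ‖kv r (p.1 - p.2)‖ₑ) :=
        ((kvr_meas r).comp (by fun_prop : Measurable (fun p : EE d × EE d => p.1 - p.2))).enorm
      beta_reduce
      rw [lintegral_lintegral_swap mr.aemeasurable]
      simp_rw [fun y : EE d => lintegral_sub_right_eq_self (μ := (volume : Measure (EE d)))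
        (fun x => ‖kv r x‖ₑ) y]
      rw [lintegral_const, lint_kv (hε.trans hr.1)]
      simp
    _ = _ := by simp

lemma gk1_int : Integrable (fun z : EE d => gk 1 z) := by
  have := gauss_int (d := d) pi_pos
  unfold gk
  simpa using this

lemma gk1_integral : ∫ z : EE d, gk 1 z = 1 := by
  have := GaussianFourier.integral_rexp_neg_mul_sq_norm (V := EE d) pi_pos
  rw [div_self pi_pos.ne', Real.one_rpow] at this
  refine Eq.trans ?_ this
  unfold gk
  simp

noncomputable def om (g : EE d → EE d) (h : EE d) : ENNReal := ∫⁻ x, ‖g (x - h) - g x‖ₑ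

lemma om_tendsto {g : EE d → EE d} (hg : Integrable g volume) :
    Filter.Tendsto (om g) (nhds 0) (nhds 0) := by
  haveI : Fact ((1 : ENNReal) ≠ ⊤) := ⟨ENNReal.one_ne_top⟩
  have hm : MemLp g 1 volume := memLp_one_iff_integrable.2 hg
  let F : Lp (EE d) 1 (volume : Measure (EE d)) := hm.toLp g
  have hc : Continuous (fun h : EE d => edist (DomAddAct.mk (-h) +ᵥ F) F) := by
    have : Continuous (fun h : EE d => DomAddAct.mk (-h)) :=
      (DomAddAct.continuous_mk).comp continuous_neg
    exact (this.vadd continuous_const).edist continuous_const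
  have e : om g = fun h : EE d => edist (DomAddAct.mk (-h) +ᵥ F) F := by
    funext h
    simp only [F]
    rw [DomAddAct.mk_vadd_toLp, Lp.edist_toLp_toLp, eLpNorm_one_eq_lintegral_enorm]
    unfold om
    refine lintegral_congr fun x => ?_
    simp [sub_eq_neg_add]
  have h0 := hc.tendsto 0
  rw [e]
  convert h0 using 2
  symm
  have := congrFun e 0
  beta_reduce at this
  rw [← this]
  simp [om]

lemma om_le {g : EE d → EE d} (hg : Integrable g volume) (h : EE d) :
    om g h ≤ 2 * ∫⁻ x, ‖g x‖ₑ := by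
  unfold om
  calc _ ≤ ∫⁻ x, (‖g (x - h)‖ₑ + ‖g x‖ₑ) := lintegral_mono fun x => enorm_sub_le
    _ = (∫⁻ x, ‖g (x - h)‖ₑ) + ∫⁻ x, ‖g x‖ₑ := lintegral_add_right' _ hg.1.enorm
    _ = _ := by rw [lintegral_sub_right_eq_self (fun x => ‖g x‖ₑ) h, two_mul]

lemma conv_eq {g : EE d → EE d} {ε : ℝ} (hε : 0 < ε) (x : EE d) :
    ∫ y, gk ε (x - y) • g y = ∫ z, gk 1 z • g (x - ε • z) := by
  have h1 := integral_sub_left_eq_self (fun z => gk ε z • g (x - z)) volume x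
  simp only [sub_sub_cancel] at h1
  have h2 := Measure.integral_comp_smul volume (fun z => gk ε z • g (x - z)) ε
  simp_rw [gk_scale hε, mul_smul] at h2
  rw [integral_smul, finrank_euclideanSpace, Fintype.card_fin, abs_of_nonneg (by positivity)] at h2
  rw [h1]
  exact (smul_right_injective _ (by positivity : ((ε ^ d)⁻¹ : ℝ) ≠ 0) h2).symm

lemma approx_le {g : EE d → EE d} (hg : Integrable g volume) (hm : Measurable g)
    {ε : ℝ} (hε : 0 < ε) :
    ∫⁻ x, ‖(∫ y, gk ε (x - y) • g y) - g x‖ₑ ≤ ∫⁻ z : EE d, ‖gk 1 z‖ₑ * om g (ε • z) := by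
  have gm : Measurable (fun z : EE d => gk 1 z) := (gk_cont 1).measurable
  have pt : ∀ x, ‖(∫ y, gk ε (x - y) • g y) - g x‖ₑ ≤
      ∫⁻ z : EE d, ‖gk 1 z‖ₑ * ‖g (x - ε • z) - g x‖ₑ := by
    intro x
    have e : g x = ∫ z : EE d, gk 1 z • g x := by rw [integral_smul_const, gk1_integral, one_smul]
    have I1 : Integrable (fun z => gk 1 z • g (x - ε • z)) volume := by
      refine int_bdd (g := fun z => g (x - ε • z)) ?_ gm 1 ?_
      · exact (hg.comp_sub_left x).comp_smul (R := ε) hε.ne'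
      · intro y
        rw [abs_of_nonneg (gk_nonneg one_pos _)]
        simpa using gk_le one_pos y
    calc _ = ‖∫ z, gk 1 z • (g (x - ε • z) - g x)‖ₑ := by
          rw [conv_eq hε]
          conv_lhs => rw [e]
          simp_rw [smul_sub]
          rw [integral_sub I1 (gk1_int.smul_const _)]
      _ ≤ _ := by
          refine (enorm_integral_le_lintegral_enorm _).trans ?_
          simp_rw [enorm_smul]
          exact le_rfl
  refine (lintegral_mono pt).trans ?_
  rw [lintegral_lintegral_swap]
  · refine lintegral_mono fun z => ?_
    unfold om
    rw [lintegral_const_mul]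
    fun_prop
  · apply Measurable.aemeasurable
    unfold Function.uncurry
    fun_prop

lemma approx_tendsto {g : EE d → EE d} (hg : Integrable g volume) (hm : Measurable g)
    (δ : ℝ) (hδ : 0 < δ) :
    Filter.Tendsto (fun n : ℕ => ∫⁻ x, ‖(∫ y, gk (δ * (1 / ((n : ℝ) + 1))) (x - y) • g y) - g x‖ₑ)
      Filter.atTop (nhds 0) := by
  have gm : Measurable (fun z : EE d => gk 1 z) := (gk_cont 1).measurable
  have omm : Measurable (om g) := by
    unfold om
    apply Measurable.lintegral_prod_right'
      (f := fun p : EE d × EE d => ‖g (p.2 - p.1) - g p.2‖ₑ)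
    fun_prop
  have key : Filter.Tendsto (fun n : ℕ =>
      ∫⁻ z : EE d, ‖gk 1 z‖ₑ * om g ((δ * (1 / ((n : ℝ) + 1))) • z)) Filter.atTop
      (nhds (∫⁻ z : EE d, 0)) := by
    refine tendsto_lintegral_of_dominated_convergence
      (fun z => ‖gk 1 z‖ₑ * (2 * ∫⁻ x, ‖g x‖ₑ)) ?_ ?_ ?_ ?_
    · intro n
      fun_prop
    · intro n
      exact Filter.Eventually.of_forall fun z => by
        beta_reduce
        gcongr
        exact om_le hg _
    · rw [lintegral_mul_const _ gm.enorm]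
      exact ENNReal.mul_ne_top gk1_int.2.ne (ENNReal.mul_ne_top (by simp) hg.2.ne)
    · refine Filter.Eventually.of_forall fun z => ?_
      have h1 : Filter.Tendsto (fun n : ℕ => (δ * (1 / ((n : ℝ) + 1))) • z) Filter.atTop
          (nhds 0) := by
        simpa using (tendsto_c.const_mul δ).smul_const z
      have h2 := ENNReal.Tendsto.const_mul (a := ‖gk 1 z‖ₑ) ((om_tendsto hg).comp h1)
        (Or.inr enorm_ne_top)
      simpa using h2
  rw [lintegral_zero] at key
  exact tendsto_of_tendsto_of_tendsto_of_le_of_le tendsto_const_nhds key (fun _ => zero_le)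
    fun n => approx_le hg hm (by positivity)

lemma conv_aesm {g : EE d → EE d} (hg : Integrable g volume) (hm : Measurable g) (r : ℝ) :
    AEStronglyMeasurable (fun x => ∫ y, gk r (x - y) • g y) volume := by
  have gm : Measurable (fun z : EE d => gk r z) := (gk_cont r).measurable
  have : StronglyMeasurable (fun p : EE d × EE d => gk r (p.1 - p.2) • g p.2) := by
    apply Measurable.stronglyMeasurable
    fun_prop
  exact this.integral_prod_right'.aestronglyMeasurable

lemma L1_final_meas (ρ0 ρ1 : Measure (EE d)) [IsFiniteMeasure ρ0] [IsFiniteMeasure ρ1]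
    (g : EE d → EE d) (hg : Integrable g volume) (hm : Measurable g)
    (base : ∀ i, ∀ φ : EE d → ℝ, ContDiff ℝ (⊤ : ℕ∞) φ → HasCompactSupport φ →
      ∫ x, Lap φ x * g x i = - ((∫ x, DD i φ x ∂ρ1) - ∫ x, DD i φ x ∂ρ0))
    {δ : ℝ} (hδ : 0 < δ) :
    ∫⁻ x, ‖(∫ y, gk δ (x - y) • g y) - g x‖ₑ ≤
      (∫⁻ z : EE d, ‖kv 1 z‖ₑ) * (ρ1 Set.univ + ρ0 Set.univ) * ENNReal.ofReal δ := by
  have h1 := (approx_tendsto hg hm δ hδ).const_add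
    ((∫⁻ z : EE d, ‖kv 1 z‖ₑ) * (ρ1 Set.univ + ρ0 Set.univ) * ENNReal.ofReal δ)
  rw [add_zero] at h1
  refine ge_of_tendsto' h1 fun n => ?_
  set ε : ℝ := δ * (1 / ((n : ℝ) + 1)) with hεd
  have hε : 0 < ε := by positivity
  have hle : ε ≤ δ := mul_le_of_le_one_right hδ.le (c_bd n).2
  calc ∫⁻ x, ‖(∫ y, gk δ (x - y) • g y) - g x‖ₑ
      ≤ ∫⁻ x, (‖(∫ y, gk δ (x - y) • g y) - ∫ y, gk ε (x - y) • g y‖ₑ +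
          ‖(∫ y, gk ε (x - y) • g y) - g x‖ₑ) := by
        refine lintegral_mono fun x => ?_
        refine le_trans (le_of_eq ?_) (enorm_add_le _ _)
        rw [sub_add_sub_cancel]
    _ = (∫⁻ x, ‖(∫ y, gk δ (x - y) • g y) - ∫ y, gk ε (x - y) • g y‖ₑ) +
          ∫⁻ x, ‖(∫ y, gk ε (x - y) • g y) - g x‖ₑ :=
        lintegral_add_right' _ ((conv_aesm hg hm ε).sub hg.1).enorm
    _ ≤ _ := by
        gcongr
        refine (L1_diff ρ0 ρ1 g hg base hε hle).trans ?_
        gcongr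
        linarith

lemma L1_final (ρ0 ρ1 : Measure (EE d)) [IsFiniteMeasure ρ0] [IsFiniteMeasure ρ1]
    (g : EE d → EE d) (hg : Integrable g volume)
    (base : ∀ i, ∀ φ : EE d → ℝ, ContDiff ℝ (⊤ : ℕ∞) φ → HasCompactSupport φ →
      ∫ x, Lap φ x * g x i = - ((∫ x, DD i φ x ∂ρ1) - ∫ x, DD i φ x ∂ρ0))
    {δ : ℝ} (hδ : 0 < δ) :
    ∫⁻ x, ‖(∫ y, gk δ (x - y) • g y) - g x‖ₑ ≤
      (∫⁻ z : EE d, ‖kv 1 z‖ₑ) * (ρ1 Set.univ + ρ0 Set.univ) * ENNReal.ofReal δ := by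
  let g' := hg.1.mk g
  have hgg : g =ᵐ[volume] g' := hg.1.ae_eq_mk
  have hg' : Integrable g' volume := hg.congr hgg
  have hm' : Measurable g' := hg.1.stronglyMeasurable_mk.measurable
  have key := L1_final_meas ρ0 ρ1 g' hg' hm' (fun i φ h1 h2 => by
    rw [← base i φ h1 h2]
    refine integral_congr_ae ?_
    filter_upwards [hgg] with x hx
    rw [hx]) hδ
  refine le_trans (le_of_eq ?_) key
  have e : ∀ x, ∫ y, gk δ (x - y) • g y = ∫ y, gk δ (x - y) • g' y := by
    intro x
    refine integral_congr_ae ?_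
    filter_upwards [hgg] with y hy
    rw [hy]
  refine lintegral_congr_ae ?_
  filter_upwards [hgg] with x hx
  rw [e, hx]

end PoiMol

/-- **Mollification estimate for the gradient of the Poisson potential
(first appendix lemma, whole-space form).** For d ≥ 2 there is a dimensional
constant C_d such that whenever Δψ = ρ¹ − ρ⁰ distributionally with ∇ψ ∈ L¹,
‖G_δ * ∇ψ − ∇ψ‖_{L¹} ≤ C_d δ (|log δ| + 1)(ρ¹(ℝ^d) + ρ⁰(ℝ^d)) for 0 < δ ≤ 1/2. -/
theorem poisson_mollification_L1_estimate (d : ℕ) (hd : 2 ≤ d) :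
    ∃ C : ℝ, 0 < C ∧
      ∀ (ρ0 ρ1 : Measure (EuclideanSpace ℝ (Fin d))),
        IsFiniteMeasure ρ0 → IsFiniteMeasure ρ1 →
        ∀ (ψ : EuclideanSpace ℝ (Fin d) → ℝ)
          (gψ : EuclideanSpace ℝ (Fin d) → EuclideanSpace ℝ (Fin d)),
          MeasureTheory.LocallyIntegrable ψ volume →
          MeasureTheory.Integrable gψ volume →
          -- gψ is the distributional gradient of ψ
          (∀ φ : EuclideanSpace ℝ (Fin d) → ℝ, ContDiff ℝ (⊤ : ℕ∞) φ → HasCompactSupport φ →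
            ∫ x : EuclideanSpace ℝ (Fin d), ψ x • gradient φ x
              = - ∫ x : EuclideanSpace ℝ (Fin d), φ x • gψ x) →
          -- Δψ = ρ¹ − ρ⁰ in the sense of distributions
          (∀ φ : EuclideanSpace ℝ (Fin d) → ℝ, ContDiff ℝ (⊤ : ℕ∞) φ → HasCompactSupport φ →
            ∫ x : EuclideanSpace ℝ (Fin d),
              ψ x * (∑ i : Fin d,
                fderiv ℝ (fun y => fderiv ℝ φ y (EuclideanSpace.single i (1 : ℝ))) x
                  (EuclideanSpace.single i (1 : ℝ)))
              = (∫ x, φ x ∂ρ1) - ∫ x, φ x ∂ρ0) →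
          ∀ δ : ℝ, 0 < δ → δ ≤ 1 / 2 →
            ∫ x : EuclideanSpace ℝ (Fin d),
              ‖(∫ y : EuclideanSpace ℝ (Fin d),
                  (δ ^ (-(d : ℤ)) * Real.exp (-(π * ‖x - y‖ ^ 2 / δ ^ 2))) • gψ y)
                - gψ x‖
            ≤ C * δ * (|Real.log δ| + 1) * ((ρ1 Set.univ).toReal + (ρ0 Set.univ).toReal) := by
  refine ⟨(∫⁻ z : PoiMol.EE d, ‖PoiMol.kv 1 z‖ₑ).toReal + 1, by positivity, ?_⟩
  intro ρ0 ρ1 i0 i1 ψ g hψ hg h1 h2 δ hδ _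
  have base := fun i => PoiMol.base_identity ρ0 ρ1 ψ g hψ hg h1 h2 i
  have key := PoiMol.L1_final ρ0 ρ1 g hg base hδ
  have hM : (∫⁻ z : PoiMol.EE d, ‖PoiMol.kv 1 z‖ₑ) ≠ ⊤ := PoiMol.kv1_integrable.2.ne
  have e : ∀ x y : EuclideanSpace ℝ (Fin d),
      δ ^ (-(d : ℤ)) * Real.exp (-(π * ‖x - y‖ ^ 2 / δ ^ 2)) = PoiMol.gk δ (x - y) := by
    intro x y
    unfold PoiMol.gk
    rw [zpow_neg, zpow_natCast]
  simp_rw [e]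
  set M := ∫⁻ z : PoiMol.EE d, ‖PoiMol.kv 1 z‖ₑ with hMd
  have hR : M * (ρ1 Set.univ + ρ0 Set.univ) * ENNReal.ofReal δ ≠ ⊤ := by
    have := measure_ne_top ρ1 Set.univ
    have := measure_ne_top ρ0 Set.univ
    finiteness
  have b1 : ∫ x, ‖(∫ y, PoiMol.gk δ (x - y) • g y) - g x‖ ≤
      (M * (ρ1 Set.univ + ρ0 Set.univ) * ENNReal.ofReal δ).toReal := by
    refine (le_abs_self _).trans ?_
    rw [← Real.norm_eq_abs, ← toReal_enorm]
    refine ENNReal.toReal_mono hR ((enorm_integral_le_lintegral_enorm _).trans ?_)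
    simpa only [enorm_norm] using key
  refine b1.trans ?_
  rw [ENNReal.toReal_mul, ENNReal.toReal_mul, ENNReal.toReal_ofReal hδ.le,
    ENNReal.toReal_add (measure_ne_top _ _) (measure_ne_top _ _)]
  have hN : 0 ≤ (ρ1 Set.univ).toReal + (ρ0 Set.univ).toReal := by positivity
  have hM0 : 0 ≤ M.toReal := ENNReal.toReal_nonneg
  calc M.toReal * ((ρ1 Set.univ).toReal + (ρ0 Set.univ).toReal) * δ
      = M.toReal * δ * 1 * ((ρ1 Set.univ).toReal + (ρ0 Set.univ).toReal) := by ring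
    _ ≤ _ := by
      gcongr
      · linarith
      · linarith [abs_nonneg (Real.log δ)]
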